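/- arXiv:0708.0433 — 2 statements merged into one kernel-verified Lean document; each statement's English description precedes it below -/
import Mathlib

section
/- Let m ≥ 1 and let α, β be real numbers with β ≠ 0. Define the m×m matrix U by U_{ij} = sinh(α(i+j+m)/2)/sinh(β(i+j+m)/2) − sinh(α(j−i+m)/2)/sinh(β(j−i+m)/2) for 1 ≤ i,j ≤ m. Then det U = [∏_{1≤i<j≤2m} 2·sinh(β(j−i)/2)] · [∏_{i=1}^{2m+1} ∏_{j=1}^{m} 2·sinh((α+β(2j−i))/2)] / [∏_{i=1}^{m} ∏_{j=1}^{m} 4·sinh(β(m+j−i)/2)·sinh(β(m+j+i)/2)]. -/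
open Finset Polynomial

theorem X_sub_C_pow_card_dvd_mul_det {n r K : Type*} [Fintype n] [DecidableEq n] [Fintype r]
    [DecidableEq r] [Field K] (M : Matrix n n K[X]) (a : K) (A : Matrix n r K) (B : Matrix r n K)
    (h : ∀ i j, (M i j).eval a = (A * B) i j) :
    (X - C a) ^ Fintype.card n ∣ (X - C a) ^ Fintype.card r * M.det := by
  have hdvd : ∀ i j, ∃ q, M i j - C ((A * B) i j) = (X - C a) * q := fun i j =>
    dvd_iff_isRoot.mpr (by simp [h])
  choose N hN using hdvd
  set x : K[X] := X - C a
  have hM : M = x • Matrix.of N - A.map C * (-B.map C) := by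
    have hmul : A.map C * B.map C = (A * B).map C := (Matrix.map_mul (f := C)).symm
    ext1 i j
    rw [Matrix.mul_neg, hmul, sub_neg_eq_add, Matrix.add_apply, Matrix.smul_apply,
      Matrix.of_apply, smul_eq_mul, ← hN, Matrix.map_apply, sub_add_cancel]
  have hdet : M.det = (Matrix.fromBlocks 1 (-B.map C) (A.map C) (x • Matrix.of N)).det := by
    rw [Matrix.det_fromBlocks_one₁₁, hM]
  have hscale : Matrix.fromBlocks (x • 1) 0 0 1 *
        Matrix.fromBlocks 1 (-B.map C) (A.map C) (x • Matrix.of N) =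
      Matrix.fromBlocks (x • 1) (-B.map C) (A.map C) (Matrix.of N) *
        Matrix.fromBlocks 1 0 0 (x • 1) := by
    simp [Matrix.fromBlocks_multiply]
  have := congrArg Matrix.det hscale
  rw [Matrix.det_mul, Matrix.det_mul, ← hdet] at this
  simp only [Matrix.det_fromBlocks_zero₁₂, Matrix.det_smul, Matrix.det_one, mul_one, one_mul] at this
  exact ⟨_, this.trans (mul_comm _ _)⟩

theorem coeff_prod_sum_eq {ι R : Type*} [CommSemiring R] (s : Finset ι) (f : ι → R[X]) (d : ι → ℕ)
    (h : ∀ i ∈ s, (f i).natDegree ≤ d i) :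
    (∏ i ∈ s, f i).coeff (∑ i ∈ s, d i) = ∏ i ∈ s, (f i).coeff (d i) := by
  classical
  induction s using Finset.induction_on with
  | empty => simp
  | insert a s ha ih =>
    have hs : ∀ i ∈ s, (f i).natDegree ≤ d i := fun i hi => h i (mem_insert_of_mem hi)
    rw [prod_insert ha, sum_insert ha, prod_insert ha,
      coeff_mul_add_eq_of_natDegree_le (h a (mem_insert_self a s))
        ((natDegree_prod_le s f).trans (sum_le_sum hs)), ih hs]

theorem natDegree_det_le_sum {n R : Type*} [Fintype n] [DecidableEq n] [CommRing R]
    (M : Matrix n n R[X]) (d e : n → ℕ) (h : ∀ i j, (M i j).natDegree ≤ d i + e j) :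
    M.det.natDegree ≤ ∑ i, d i + ∑ j, e j := by
  rw [Matrix.det_apply]
  refine natDegree_sum_le_of_forall_le _ _ fun σ _ => (natDegree_smul_le _ _).trans ?_
  refine (natDegree_prod_le _ _).trans ((sum_le_sum fun i _ => h (σ i) i).trans ?_)
  rw [sum_add_distrib, Equiv.sum_comp σ d]

theorem coeff_det_sum {n R : Type*} [Fintype n] [DecidableEq n] [CommRing R]
    (M : Matrix n n R[X]) (d e : n → ℕ) (h : ∀ i j, (M i j).natDegree ≤ d i + e j) :
    M.det.coeff (∑ i, d i + ∑ j, e j) =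
      (Matrix.of fun i j => (M i j).coeff (d i + e j)).det := by
  rw [Matrix.det_apply, Matrix.det_apply, finsetSum_coeff]
  refine sum_congr rfl fun σ _ => ?_
  rw [coeff_smul, ← Equiv.sum_comp σ d, ← sum_add_distrib,
    coeff_prod_sum_eq _ _ _ fun i _ => h (σ i) i]
  rfl

theorem two_mul_sinh_mul_sub (a b c d : ℝ) :
    (2 * Real.sinh (c + b)) * (2 * Real.sinh (a + d)) -
      (2 * Real.sinh (c + d)) * (2 * Real.sinh (a + b)) =
    (2 * Real.sinh (c - a)) * (2 * Real.sinh (d - b)) := by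
  simp only [Real.sinh_add, Real.sinh_sub]
  ring

theorem det_inv_two_mul_sinh (n : ℕ) (u v : Fin n → ℝ) (h : ∀ i j, Real.sinh (u i + v j) ≠ 0) :
    (Matrix.of fun i j => 1 / (2 * Real.sinh (u i + v j))).det =
      (∏ i, ∏ j ∈ Ioi i, (2 * Real.sinh (u j - u i)) * (2 * Real.sinh (v j - v i))) /
        ∏ i, ∏ j, 2 * Real.sinh (u i + v j) := by
  induction n with
  | zero => simp
  | succ n ih =>
    set A : Matrix (Fin (n + 1)) (Fin (n + 1)) ℝ :=
      Matrix.of fun i j => 1 / (2 * Real.sinh (u i + v j)) with hA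
    set c : Fin (n + 1) → ℝ := Fin.cons 0 fun i =>
      - (2 * Real.sinh (u 0 + v 0)) / (2 * Real.sinh (u i.succ + v 0)) with hc
    have h2 : ∀ i j, 2 * Real.sinh (u i + v j) ≠ 0 := fun i j => mul_ne_zero two_ne_zero (h i j)
    set A' : Matrix (Fin (n + 1)) (Fin (n + 1)) ℝ :=
      Matrix.of fun i j => A i j + c i * A 0 j with hA'
    have hdet : A'.det = A.det :=
      Matrix.det_eq_of_forall_row_eq_smul_add_const c 0 (by simp [hc]) fun i j => rfl
    have hcol : ∀ i : Fin n, A' i.succ 0 = 0 := fun i => by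
      have := h 0 0; have := h i.succ 0
      simp only [hA', hA, hc, Matrix.of_apply, Fin.cons_succ]
      field_simp
      ring
    have hsub : ∀ i j : Fin n, A' i.succ j.succ =
        ((2 * Real.sinh (u i.succ - u 0)) / (2 * Real.sinh (u i.succ + v 0))) *
        (((2 * Real.sinh (v j.succ - v 0)) / (2 * Real.sinh (u 0 + v j.succ))) *
          (1 / (2 * Real.sinh (u i.succ + v j.succ)))) := fun i j => by
      have hk := two_mul_sinh_mul_sub (u 0) (v 0) (u i.succ) (v j.succ)
      have h1 := h2 i.succ 0
      have h3 := h2 0 j.succ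
      have h4 := h2 i.succ j.succ
      simp only [hA', hA, hc, Matrix.of_apply, Fin.cons_succ]
      generalize 2 * Real.sinh (u i.succ + v 0) = a at *
      generalize 2 * Real.sinh (u 0 + v j.succ) = b at *
      generalize 2 * Real.sinh (u i.succ + v j.succ) = d at *
      field_simp
      linear_combination hk
    have hA0 : A' 0 0 = 1 / (2 * Real.sinh (u 0 + v 0)) := by simp [hA', hA, hc]
    have hminor : (A'.submatrix (Fin.succAbove 0) Fin.succ).det =
        (∏ i : Fin n, (2 * Real.sinh (u i.succ - u 0)) / (2 * Real.sinh (u i.succ + v 0))) *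
        ((∏ j : Fin n, (2 * Real.sinh (v j.succ - v 0)) / (2 * Real.sinh (u 0 + v j.succ))) *
          (Matrix.of fun i j : Fin n => 1 / (2 * Real.sinh (u i.succ + v j.succ))).det) := by
      rw [← Matrix.det_mul_row, ← Matrix.det_mul_column]
      congr 1
      ext i j
      simp only [Matrix.submatrix_apply, Fin.succAbove_zero, hsub, Matrix.of_apply]
    rw [← hdet, Matrix.det_succ_column_zero, Fin.sum_univ_succ]
    simp only [hcol, mul_zero, zero_mul, sum_const_zero, add_zero]
    rw [hminor, hA0, ih (fun i => u i.succ) (fun i => v i.succ) fun i j => h _ _]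
    simp only [Fin.prod_univ_succ (n := n), Fin.prod_Ioi_zero, Fin.prod_Ioi_succ, prod_mul_distrib,
      prod_inv_distrib, Fin.val_zero, pow_zero, one_mul, div_eq_mul_inv, mul_inv]
    ring

/-- The matrix of differences of ratios of hyperbolic sines whose determinant is evaluated. -/
noncomputable def sinhRatioMatrix (m : ℕ) (α β : ℝ) : Matrix (Fin m) (Fin m) ℝ :=
  Matrix.of fun i j =>
    Real.sinh (α * (((i : ℕ) + 1 : ℝ) + ((j : ℕ) + 1 : ℝ) + m) / 2) /
      Real.sinh (β * (((i : ℕ) + 1 : ℝ) + ((j : ℕ) + 1 : ℝ) + m) / 2) -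
    Real.sinh (α * (((j : ℕ) + 1 : ℝ) - ((i : ℕ) + 1 : ℝ) + m) / 2) /
      Real.sinh (β * (((j : ℕ) + 1 : ℝ) - ((i : ℕ) + 1 : ℝ) + m) / 2)

/-- A polynomial matrix whose value at `exp α` is `sinhRatioMatrix m α β` up to scaling of rows
and columns. -/
noncomputable def sinhRatioPoly (m : ℕ) (β : ℝ) : Matrix (Fin m) (Fin m) ℝ[X] :=
  Matrix.of fun i j =>
    C (1 / (2 * Real.sinh (β * ((i : ℕ) + 1 : ℝ) / 2 + β * ((j : ℕ) + 1 + m : ℝ) / 2))) *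
        (X ^ (((i : ℕ) + 1) + ((j : ℕ) + 1 + m)) - 1) -
      C (1 / (2 * Real.sinh (β * (((j : ℕ) + 1 : ℝ) - ((i : ℕ) + 1 : ℝ) + m) / 2))) *
        (X ^ ((j : ℕ) + 1 + m) - X ^ ((i : ℕ) + 1))

theorem exp_sub_exp_eq_two_mul_sinh (x y : ℝ) :
    Real.exp x - Real.exp y = Real.exp ((x + y) / 2) * (2 * Real.sinh ((x - y) / 2)) := by
  rw [Real.sinh_eq, mul_div_cancel₀ _ two_ne_zero, mul_sub, ← Real.exp_add, ← Real.exp_add]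
  congr 2 <;> ring

theorem eval_sinhRatioPoly (m : ℕ) (α β : ℝ) (i j : Fin m) :
    (sinhRatioPoly m β i j).eval (Real.exp α) =
      Real.exp (α * ((i : ℕ) + 1 : ℝ) / 2) *
        (Real.exp (α * ((j : ℕ) + 1 + m : ℝ) / 2) * sinhRatioMatrix m α β i j) := by
  have h1 : Real.exp α ^ (((i : ℕ) + 1) + ((j : ℕ) + 1 + m)) - 1 =
      Real.exp (α * ((i : ℕ) + 1 : ℝ) / 2) * Real.exp (α * ((j : ℕ) + 1 + m : ℝ) / 2) *
        (2 * Real.sinh (α * (((i : ℕ) + 1 : ℝ) + ((j : ℕ) + 1 : ℝ) + m) / 2)) := by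
    have h := exp_sub_exp_eq_two_mul_sinh ((((i : ℕ) + 1) + ((j : ℕ) + 1 + m) : ℕ) * α) 0
    rw [Real.exp_zero, Real.exp_nat_mul] at h
    rw [h, ← Real.exp_add]
    push_cast
    congr 3 <;> ring
  have h2 : Real.exp α ^ ((j : ℕ) + 1 + m) - Real.exp α ^ ((i : ℕ) + 1) =
      Real.exp (α * ((i : ℕ) + 1 : ℝ) / 2) * Real.exp (α * ((j : ℕ) + 1 + m : ℝ) / 2) *
        (2 * Real.sinh (α * (((j : ℕ) + 1 : ℝ) - ((i : ℕ) + 1 : ℝ) + m) / 2)) := by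
    rw [← Real.exp_nat_mul, ← Real.exp_nat_mul, exp_sub_exp_eq_two_mul_sinh, ← Real.exp_add]
    push_cast
    congr 3 <;> ring
  have h3 : β * ((i : ℕ) + 1 : ℝ) / 2 + β * ((j : ℕ) + 1 + m : ℝ) / 2 =
      β * (((i : ℕ) + 1 : ℝ) + ((j : ℕ) + 1 : ℝ) + m) / 2 := by ring
  simp only [sinhRatioPoly, sinhRatioMatrix, Matrix.of_apply, eval_sub, eval_mul, eval_C, eval_pow,
    eval_X, eval_one, h1, h2, h3]
  simp only [div_eq_mul_inv, mul_inv]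
  ring

theorem eval_det_sinhRatioPoly (m : ℕ) (α β : ℝ) :
    (sinhRatioPoly m β).det.eval (Real.exp α) =
      (∏ i : Fin m, Real.exp (α * ((i : ℕ) + 1 : ℝ) / 2)) *
        ((∏ j : Fin m, Real.exp (α * ((j : ℕ) + 1 + m : ℝ) / 2)) * (sinhRatioMatrix m α β).det) := by
  rw [← Matrix.det_mul_row, ← Matrix.det_mul_column, ← coe_evalRingHom, RingHom.map_det]
  congr 1
  ext i j
  exact eval_sinhRatioPoly m α β i j

theorem sinh_mul_div_two_ne_zero {β x : ℝ} (hβ : β ≠ 0) (hx : 0 < x) :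
    Real.sinh (β * x / 2) ≠ 0 := by
  rw [Ne, Real.sinh_eq_zero]
  positivity

theorem index_sub_pos {m : ℕ} (i j : Fin m) :
    (0 : ℝ) < ((j : ℕ) + 1 : ℝ) - ((i : ℕ) + 1 : ℝ) + m := by
  have : ((i : ℕ) : ℝ) < m := by exact_mod_cast i.isLt
  have : (0 : ℝ) ≤ ((j : ℕ) : ℝ) := by positivity
  linarith

theorem sinh_ratio_add_two {x y : ℝ} (hx : Real.sinh x ≠ 0) :
    Real.sinh (y + 2 * x) / Real.sinh x = Real.sinh y / Real.sinh x + 2 * Real.cosh (y + x) := by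
  field_simp
  have h1 := Real.sinh_add (y + x) x
  have h2 := Real.sinh_sub (y + x) x
  rw [add_assoc, ← two_mul] at h1
  rw [add_sub_cancel_right] at h2
  linear_combination h1 - h2

theorem sinhRatioMatrix_nat_mul (m : ℕ) {β : ℝ} (hβ : β ≠ 0) (e : ℕ) (he : e < 2) (r : ℕ)
    (i j : Fin m) :
    sinhRatioMatrix m (((2 * r + e : ℕ) : ℝ) * β) β i j =
      ∑ s ∈ range r, 4 * Real.sinh (((2 * s + e + 1 : ℕ) : ℝ) * β * ((i : ℕ) + 1 : ℝ) / 2) *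
        Real.sinh (((2 * s + e + 1 : ℕ) : ℝ) * β * ((j : ℕ) + 1 + m : ℝ) / 2) := by
  have hp := sinh_mul_div_two_ne_zero hβ
    (show (0 : ℝ) < ((i : ℕ) + 1 : ℝ) + ((j : ℕ) + 1 : ℝ) + m by positivity)
  have hq := sinh_mul_div_two_ne_zero hβ (index_sub_pos i j)
  induction r with
  | zero => 
    rw [range_zero, sum_empty, sinhRatioMatrix, Matrix.of_apply]
    interval_cases e
    · simp
    · simp only [mul_zero, zero_add, Nat.cast_one, one_mul, div_self hp, div_self hq, sub_self]
  | succ r ih =>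
    rw [sum_range_succ, ← ih]
    simp only [sinhRatioMatrix, Matrix.of_apply]
    have key : ∀ x : ℝ, ((2 * (r + 1) + e : ℕ) : ℝ) * β * x / 2 =
        ((2 * r + e : ℕ) : ℝ) * β * x / 2 + 2 * (β * x / 2) := fun x => by push_cast; ring
    rw [key, key, sinh_ratio_add_two hp, sinh_ratio_add_two hq]
    set A := ((2 * r + e + 1 : ℕ) : ℝ) * β * ((i : ℕ) + 1 : ℝ) / 2 with hA
    set B := ((2 * r + e + 1 : ℕ) : ℝ) * β * ((j : ℕ) + 1 + m : ℝ) / 2 with hB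
    have e1 : ((2 * r + e : ℕ) : ℝ) * β * (((i : ℕ) + 1 : ℝ) + ((j : ℕ) + 1 : ℝ) + m) / 2 +
        β * (((i : ℕ) + 1 : ℝ) + ((j : ℕ) + 1 : ℝ) + m) / 2 = B + A := by
      rw [hA, hB]; push_cast; ring
    have e2 : ((2 * r + e : ℕ) : ℝ) * β * (((j : ℕ) + 1 : ℝ) - ((i : ℕ) + 1 : ℝ) + m) / 2 +
        β * (((j : ℕ) + 1 : ℝ) - ((i : ℕ) + 1 : ℝ) + m) / 2 = B - A := by
      rw [hA, hB]; push_cast; ring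
    rw [e1, e2, Real.cosh_add, Real.cosh_sub]
    ring

theorem sinhRatioMatrix_neg (m : ℕ) (α β : ℝ) :
    sinhRatioMatrix m (-α) β = -sinhRatioMatrix m α β := by
  ext i j
  simp only [sinhRatioMatrix, Matrix.of_apply, Matrix.neg_apply, neg_mul, neg_div, Real.sinh_neg]
  ring

theorem exists_sinhRatioMatrix_int_mul_eq_mul (m : ℕ) {β : ℝ} (hβ : β ≠ 0) (k : ℤ) :
    ∃ (A : Matrix (Fin m) (Fin (k.natAbs / 2)) ℝ) (B : Matrix (Fin (k.natAbs / 2)) (Fin m) ℝ),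
      sinhRatioMatrix m (k * β) β = A * B := by
  have hnat : ∃ (A : Matrix (Fin m) (Fin (k.natAbs / 2)) ℝ)
      (B : Matrix (Fin (k.natAbs / 2)) (Fin m) ℝ),
      sinhRatioMatrix m ((k.natAbs : ℝ) * β) β = A * B := by
    refine ⟨Matrix.of fun i s => 4 * Real.sinh (((2 * (s : ℕ) + k.natAbs % 2 + 1 : ℕ) : ℝ) * β *
        ((i : ℕ) + 1 : ℝ) / 2),
      Matrix.of fun s j => Real.sinh (((2 * (s : ℕ) + k.natAbs % 2 + 1 : ℕ) : ℝ) * β *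
        ((j : ℕ) + 1 + m : ℝ) / 2), ?_⟩
    ext i j
    have h := sinhRatioMatrix_nat_mul m hβ (k.natAbs % 2) (Nat.mod_lt _ two_pos)
      (k.natAbs / 2) i j
    rw [Nat.div_add_mod] at h
    rw [h, Matrix.mul_apply, ← Fin.sum_univ_eq_sum_range
      (fun s => 4 * Real.sinh (((2 * s + k.natAbs % 2 + 1 : ℕ) : ℝ) * β * ((i : ℕ) + 1 : ℝ) / 2) *
        Real.sinh (((2 * s + k.natAbs % 2 + 1 : ℕ) : ℝ) * β * ((j : ℕ) + 1 + m : ℝ) / 2))]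
    rfl
  obtain ⟨A, B, h⟩ := hnat
  rcases Int.natAbs_eq k with hk | hk
  · refine ⟨A, B, ?_⟩
    rw [← h]
    congr 2
    simpa using congrArg (Int.cast : ℤ → ℝ) hk
  · refine ⟨-A, B, ?_⟩
    rw [Matrix.neg_mul, ← h, ← sinhRatioMatrix_neg, ← neg_mul]
    congr 2
    simpa using congrArg (Int.cast : ℤ → ℝ) hk

theorem le_rootMultiplicity_det_sinhRatioPoly (m : ℕ) {β : ℝ} (hβ : β ≠ 0)
    (h0 : (sinhRatioPoly m β).det ≠ 0) (k : ℤ) :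
    m - k.natAbs / 2 ≤ (sinhRatioPoly m β).det.rootMultiplicity (Real.exp (k * β)) := by
  obtain ⟨A, B, h⟩ := exists_sinhRatioMatrix_int_mul_eq_mul m hβ k
  rw [le_rootMultiplicity_iff h0]
  rcases le_total m (k.natAbs / 2) with hle | hle
  · simp [Nat.sub_eq_zero_of_le hle]
  have hdvd := X_sub_C_pow_card_dvd_mul_det (sinhRatioPoly m β) (Real.exp (k * β))
    (Matrix.of fun i s => Real.exp (k * β * ((i : ℕ) + 1 : ℝ) / 2) * A i s)
    (Matrix.of fun s j => Real.exp (k * β * ((j : ℕ) + 1 + m : ℝ) / 2) * B s j) fun i j => by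
      rw [eval_sinhRatioPoly, h, Matrix.mul_apply, Matrix.mul_apply, mul_sum, mul_sum]
      refine sum_congr rfl fun s _ => ?_
      simp only [Matrix.of_apply]
      ring
  rw [Fintype.card_fin, Fintype.card_fin] at hdvd
  nth_rewrite 1 [← Nat.add_sub_cancel' hle] at hdvd
  rw [pow_add] at hdvd
  exact (mul_dvd_mul_iff_left (pow_ne_zero _ (X_sub_C_ne_zero _))).mp hdvd

theorem natDegree_sinhRatioPoly_le (m : ℕ) (β : ℝ) (i j : Fin m) :
    (sinhRatioPoly m β i j).natDegree ≤ ((i : ℕ) + 1) + ((j : ℕ) + 1 + m) := by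
  simp only [sinhRatioPoly, Matrix.of_apply]
  refine (natDegree_sub_le _ _).trans (max_le ?_ ?_) <;>
    refine (natDegree_C_mul_le _ _).trans ((natDegree_sub_le _ _).trans ?_)
  · simp
  · simp only [natDegree_X_pow]
    omega

theorem coeff_sinhRatioPoly (m : ℕ) (β : ℝ) (i j : Fin m) :
    (sinhRatioPoly m β i j).coeff (((i : ℕ) + 1) + ((j : ℕ) + 1 + m)) =
      1 / (2 * Real.sinh (β * ((i : ℕ) + 1 : ℝ) / 2 + β * ((j : ℕ) + 1 + m : ℝ) / 2)) := by
  simp only [sinhRatioPoly, Matrix.of_apply, coeff_sub, coeff_C_mul, coeff_X_pow, coeff_one]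
  have h1 : ((i : ℕ) + 1) + ((j : ℕ) + 1 + m) ≠ 0 := by omega
  have h2 : ((i : ℕ) + 1) + ((j : ℕ) + 1 + m) ≠ (j : ℕ) + 1 + m := by omega
  have h3 : ((i : ℕ) + 1) + ((j : ℕ) + 1 + m) ≠ (i : ℕ) + 1 := by omega
  rw [if_pos trivial, if_neg h1, if_neg h2, if_neg h3]
  ring

theorem prod_fin_Ioi_eq_prod_Icc_prod_Ico {M : Type*} [CommMonoid M] (m : ℕ) (f : ℕ → ℕ → M) :
    ∏ i : Fin m, ∏ j ∈ Ioi i, f ((i : ℕ) + 1) ((j : ℕ) + 1) =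
      ∏ j ∈ Icc 1 m, ∏ i ∈ Ico 1 j, f i j := by
  have hinner : ∀ j : Fin m, ∏ i ∈ Iio j, f ((i : ℕ) + 1) ((j : ℕ) + 1) =
      ∏ i ∈ Ico 1 ((j : ℕ) + 1), f i ((j : ℕ) + 1) := fun j => by
    have h := prod_map (Iio j) Fin.valEmbedding fun i => f (i + 1) ((j : ℕ) + 1)
    rw [Fin.map_valEmbedding_Iio, Nat.Iio_eq_range] at h
    rw [prod_Ico_eq_prod_range, Nat.add_sub_cancel]
    simpa [add_comm] using h.symm
  rw [prod_comm' (t' := univ) (s' := fun j => Iio j) (by simp)]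
  simp_rw [hinner]
  rw [Fin.prod_univ_eq_prod_range (fun j => ∏ i ∈ Ico 1 (j + 1), f i (j + 1)) m,
    ← Ico_add_one_right_eq_Icc, prod_Ico_eq_prod_range, Nat.add_sub_cancel]
  simp_rw [add_comm 1]

theorem prod_fin_eq_prod_Icc {M : Type*} [CommMonoid M] (m : ℕ) (f : ℕ → M) :
    ∏ i : Fin m, f ((i : ℕ) + 1) = ∏ i ∈ Icc 1 m, f i := by
  rw [Fin.prod_univ_eq_prod_range (fun i => f (i + 1)) m, ← Ico_add_one_right_eq_Icc,
    prod_Ico_eq_prod_range, Nat.add_sub_cancel]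
  simp_rw [add_comm 1]

theorem prod_Icc_two_mul_prod_Ico_sub (m : ℕ) (f : ℝ → ℝ) :
    ∏ j ∈ Icc 1 (2 * m), ∏ i ∈ Ico 1 j, f ((j : ℝ) - (i : ℝ)) =
      (∏ j ∈ Icc 1 m, ∏ i ∈ Ico 1 j, f ((j : ℝ) - (i : ℝ)) * f ((j : ℝ) - (i : ℝ))) *
        ∏ i ∈ Icc 1 m, ∏ j ∈ Icc 1 m, f ((m : ℝ) + (j : ℝ) - (i : ℝ)) := by
  have hshift : ∏ j ∈ Ico (1 + m) (m + 1 + m), ∏ i ∈ Ico 1 j, f ((j : ℝ) - (i : ℝ)) =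
      ∏ j ∈ Ico 1 (m + 1), ((∏ i ∈ Ico 1 (1 + m), f ((m : ℝ) + (j : ℝ) - (i : ℝ))) *
        ∏ i ∈ Ico 1 j, f ((j : ℝ) - (i : ℝ))) := by
    rw [← prod_Ico_add' (fun j : ℕ => ∏ i ∈ Ico 1 j, f ((j : ℝ) - (i : ℝ)))]
    refine prod_congr rfl fun j hj => ?_
    rw [mem_Ico] at hj
    rw [← prod_Ico_consecutive _ (show 1 ≤ 1 + m by omega) (show 1 + m ≤ j + m by omega),
      ← prod_Ico_add' (fun i : ℕ => f (((j + m : ℕ) : ℝ) - (i : ℝ)))]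
    congr 1 <;> refine prod_congr rfl fun i _ => ?_ <;> push_cast <;> congr 1 <;> ring
  rw [← Ico_add_one_right_eq_Icc, ← Ico_add_one_right_eq_Icc,
    ← prod_Ico_consecutive _ (show 1 ≤ 1 + m by omega) (show 1 + m ≤ 2 * m + 1 by omega),
    show 2 * m + 1 = m + 1 + m by ring, hshift, prod_mul_distrib, prod_comm, add_comm 1 m]
  simp_rw [prod_mul_distrib]
  ring

theorem sum_fin_add_one_add_sum_fin (m : ℕ) :
    ∑ i : Fin m, ((i : ℕ) + 1) + ∑ j : Fin m, ((j : ℕ) + 1 + m) = (2 * m + 1) * m := by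
  rw [Fin.sum_univ_eq_sum_range (fun i => i + 1), Fin.sum_univ_eq_sum_range (fun i => i + 1 + m)]
  simp only [sum_add_distrib, sum_const, card_range, smul_eq_mul]
  have := sum_range_id_mul_two m
  cases m with
  | zero => simp
  | succ m =>
    simp only [Nat.add_sub_cancel] at this
    linear_combination this

theorem coeff_det_sinhRatioPoly (m : ℕ) {β : ℝ} (hβ : β ≠ 0) :
    (sinhRatioPoly m β).det.coeff ((2 * m + 1) * m) =
      (∏ j ∈ Icc 1 m, ∏ i ∈ Ico 1 j, (2 * Real.sinh (β * ((j : ℝ) - (i : ℝ)) / 2)) *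
        (2 * Real.sinh (β * ((j : ℝ) - (i : ℝ)) / 2))) /
      ∏ i ∈ Icc 1 m, ∏ j ∈ Icc 1 m, 2 * Real.sinh (β * ((m : ℝ) + (j : ℝ) + (i : ℝ)) / 2) := by
  rw [← sum_fin_add_one_add_sum_fin, coeff_det_sum _ _ _ (natDegree_sinhRatioPoly_le m β)]
  simp_rw [coeff_sinhRatioPoly]
  rw [det_inv_two_mul_sinh m (fun i => β * ((i : ℕ) + 1 : ℝ) / 2)
    (fun j => β * ((j : ℕ) + 1 + m : ℝ) / 2), ← prod_fin_Ioi_eq_prod_Icc_prod_Ico, ← prod_fin_eq_prod_Icc]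
  · congr 1
    · refine prod_congr rfl fun i _ => prod_congr rfl fun j _ => ?_
      push_cast
      congr 3 <;> ring
    · refine prod_congr rfl fun i _ => ?_
      rw [← prod_fin_eq_prod_Icc]
      refine prod_congr rfl fun j _ => ?_
      push_cast
      congr 2
      ring
  · intro i j
    rw [← add_div, ← mul_add]
    exact sinh_mul_div_two_ne_zero hβ (by positivity)

theorem coeff_det_sinhRatioPoly_ne_zero (m : ℕ) {β : ℝ} (hβ : β ≠ 0) :
    (sinhRatioPoly m β).det.coeff ((2 * m + 1) * m) ≠ 0 := by
  rw [coeff_det_sinhRatioPoly m hβ]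
  refine div_ne_zero (prod_ne_zero_iff.mpr fun j _ => prod_ne_zero_iff.mpr fun i hi => ?_)
    (prod_ne_zero_iff.mpr fun i hi => prod_ne_zero_iff.mpr fun j _ => ?_)
  · have hlt : (i : ℝ) < j := by exact_mod_cast (mem_Ico.mp hi).2
    have := sinh_mul_div_two_ne_zero hβ (sub_pos.mpr hlt)
    positivity
  · have hpos : (0 : ℝ) < i := by exact_mod_cast (mem_Icc.mp hi).1
    have := sinh_mul_div_two_ne_zero hβ (show (0 : ℝ) < (m : ℝ) + (j : ℝ) + (i : ℝ) by positivity)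
    positivity

theorem card_filter_sub_two_mul_le (m : ℕ) (k : ℤ) :
    #{p ∈ Icc 1 (2 * m + 1) ×ˢ Icc 1 m | ((p.1 : ℤ) - 2 * (p.2 : ℤ)) = k} ≤ m - k.natAbs / 2 := by
  have hinj : Set.InjOn Prod.snd
      (({p ∈ Icc 1 (2 * m + 1) ×ˢ Icc 1 m | ((p.1 : ℤ) - 2 * (p.2 : ℤ)) = k} : Finset (ℕ × ℕ)) :
        Set (ℕ × ℕ)) := by
    rintro ⟨a, b⟩ h ⟨c, d⟩ h' (rfl : b = d)
    simp only [coe_filter, Set.mem_ofPred_eq] at h h'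
    ext
    · simp only; omega
    · rfl
  rw [← card_image_of_injOn hinj]
  rcases le_total 0 k with hk | hk
  · refine (card_le_card (t := Icc 1 (m - k.natAbs / 2)) fun j hj => ?_).trans (by simp)
    simp only [mem_image, mem_filter, mem_product, mem_Icc, Prod.exists] at hj ⊢
    obtain ⟨a, b, h, rfl⟩ := hj
    omega
  · refine (card_le_card (t := Icc (k.natAbs / 2 + 1) m) fun j hj => ?_).trans (by simp)
    simp only [mem_image, mem_filter, mem_product, mem_Icc, Prod.exists] at hj ⊢
    obtain ⟨a, b, h, rfl⟩ := hj
    omega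

theorem det_sinhRatioPoly_eq (m : ℕ) {β : ℝ} (hβ : β ≠ 0) :
    (sinhRatioPoly m β).det = C ((sinhRatioPoly m β).det.coeff ((2 * m + 1) * m)) *
      ∏ p ∈ Icc 1 (2 * m + 1) ×ˢ Icc 1 m,
        (X - C (Real.exp (((p.1 : ℤ) - 2 * (p.2 : ℤ) : ℤ) * β))) := by
  have hc := coeff_det_sinhRatioPoly_ne_zero m hβ
  have hdeg := natDegree_det_le_sum _ _ _ (natDegree_sinhRatioPoly_le m β)
  rw [sum_fin_add_one_add_sum_fin] at hdeg
  set D := (sinhRatioPoly m β).det with hD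
  have hD0 : D ≠ 0 := by
    rintro h
    simp [h] at hc
  set f : ℕ × ℕ → ℝ := fun p => Real.exp (((p.1 : ℤ) - 2 * (p.2 : ℤ) : ℤ) * β) with hf
  set s : Multiset ℝ := (Icc 1 (2 * m + 1) ×ˢ Icc 1 m).val.map f with hs
  have hle : s ≤ D.roots := by
    rw [Multiset.le_iff_count]
    intro a
    by_cases ha : a ∈ s
    · obtain ⟨q, -, rfl⟩ := Multiset.mem_map.mp ha
      rw [count_roots, hs, Multiset.count_map]
      refine le_trans (le_trans (le_of_eq ?_) (card_filter_sub_two_mul_le m (q.1 - 2 * q.2)))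
        (le_rootMultiplicity_det_sinhRatioPoly m hβ hD0 _)
      rw [← filter_val, card_val]
      congr 1
      refine filter_congr fun p _ => ?_
      simp only [hf, Real.exp_eq_exp, mul_left_inj' hβ, Int.cast_inj]
      exact eq_comm
    · rw [Multiset.count_eq_zero_of_notMem ha]
      exact Nat.zero_le _
  have hcard : Multiset.card s = (2 * m + 1) * m := by simp [hs]
  have hroots : s = D.roots :=
    Multiset.eq_of_le_of_card_le hle (((card_roots' D).trans hdeg).trans hcard.ge)
  have hnat : D.natDegree = (2 * m + 1) * m :=
    le_antisymm hdeg (le_natDegree_of_ne_zero hc)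
  have h := C_leadingCoeff_mul_prod_multiset_X_sub_C (p := D) (by rw [← hroots, hcard, hnat])
  rw [← hroots, leadingCoeff, hnat, hs, Multiset.map_map] at h
  exact h.symm

theorem sum_Icc_one_cast (n : ℕ) : ∑ i ∈ Icc 1 n, (i : ℝ) = n * (n + 1) / 2 := by
  induction n with
  | zero => simp
  | succ n ih =>
    rw [sum_Icc_succ_top (by omega), ih]
    push_cast
    ring

theorem det_sinhRatioMatrix (m : ℕ) (α : ℝ) {β : ℝ} (hβ : β ≠ 0) :
    (sinhRatioMatrix m α β).det = (sinhRatioPoly m β).det.coeff ((2 * m + 1) * m) *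
      ∏ i ∈ Icc 1 (2 * m + 1), ∏ j ∈ Icc 1 m,
        2 * Real.sinh ((α + β * (2 * (j : ℝ) - (i : ℝ))) / 2) := by
  have h := eval_det_sinhRatioPoly m α β
  have hscale : (∏ i : Fin m, Real.exp (α * ((i : ℕ) + 1 : ℝ) / 2)) *
      (∏ j : Fin m, Real.exp (α * ((j : ℕ) + 1 + m : ℝ) / 2)) =
      Real.exp (((2 * m + 1) * m : ℕ) * (α / 2)) := by
    rw [← Real.exp_sum, ← Real.exp_sum, ← Real.exp_add, ← sum_fin_add_one_add_sum_fin]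
    push_cast
    rw [add_mul, sum_mul, sum_mul]
    congr 2 <;> refine sum_congr rfl fun i _ => ?_ <;> ring
  have hsum : ∑ p ∈ Icc 1 (2 * m + 1) ×ˢ Icc 1 m,
      (((p.1 : ℤ) - 2 * (p.2 : ℤ) : ℤ) : ℝ) = 0 := by
    rw [sum_product]
    push_cast
    simp only [sum_sub_distrib, sum_const, ← mul_sum, Nat.card_Icc, nsmul_eq_mul, sum_Icc_one_cast]
    push_cast [Nat.add_sub_cancel]
    ring
  have hprod : ∏ p ∈ Icc 1 (2 * m + 1) ×ˢ Icc 1 m,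
      (Real.exp α - Real.exp (((p.1 : ℤ) - 2 * (p.2 : ℤ) : ℤ) * β)) =
      Real.exp (((2 * m + 1) * m : ℕ) * (α / 2)) *
      ∏ i ∈ Icc 1 (2 * m + 1), ∏ j ∈ Icc 1 m,
        2 * Real.sinh ((α + β * (2 * (j : ℝ) - (i : ℝ))) / 2) := by
    simp_rw [exp_sub_exp_eq_two_mul_sinh]
    rw [prod_mul_distrib, ← Real.exp_sum, prod_product]
    congr 1
    · congr 1
      simp_rw [add_div, mul_div_assoc]
      rw [sum_add_distrib, ← sum_mul, hsum]
      simp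
    · refine prod_congr rfl fun i _ => prod_congr rfl fun j _ => ?_
      push_cast
      congr 2
      ring
  rw [← mul_assoc, hscale, det_sinhRatioPoly_eq m hβ, eval_mul, eval_C, eval_prod] at h
  simp only [eval_sub, eval_X, eval_C] at h
  rw [hprod, mul_left_comm] at h
  exact (mul_left_cancel₀ (Real.exp_ne_zero _) h).symm

/-- Kuperberg's determinant evaluation: for `m ≥ 1`, real `α`, `β` with `β ≠ 0`,
the determinant of the matrix
`U_{ij} = sinh(α(i+j+m)/2)/sinh(β(i+j+m)/2) − sinh(α(j−i+m)/2)/sinh(β(j−i+m)/2)`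
(`1 ≤ i,j ≤ m`) is given by an explicit product of hyperbolic sines. -/
theorem kuperberg_det (m : ℕ) (hm : 1 ≤ m) (α β : ℝ) (hβ : β ≠ 0) :
    Matrix.det (Matrix.of fun i j : Fin m =>
      Real.sinh (α * (((i : ℕ) + 1 : ℝ) + ((j : ℕ) + 1 : ℝ) + m) / 2) /
        Real.sinh (β * (((i : ℕ) + 1 : ℝ) + ((j : ℕ) + 1 : ℝ) + m) / 2) -
      Real.sinh (α * (((j : ℕ) + 1 : ℝ) - ((i : ℕ) + 1 : ℝ) + m) / 2) /
        Real.sinh (β * (((j : ℕ) + 1 : ℝ) - ((i : ℕ) + 1 : ℝ) + m) / 2)) =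
    (∏ j ∈ Icc 1 (2 * m), ∏ i ∈ Ico 1 j, 2 * Real.sinh (β * ((j : ℝ) - (i : ℝ)) / 2)) *
    (∏ i ∈ Icc 1 (2 * m + 1), ∏ j ∈ Icc 1 m,
      2 * Real.sinh ((α + β * (2 * (j : ℝ) - (i : ℝ))) / 2)) /
    (∏ i ∈ Icc 1 m, ∏ j ∈ Icc 1 m,
      4 * Real.sinh (β * ((m : ℝ) + (j : ℝ) - (i : ℝ)) / 2) *
        Real.sinh (β * ((m : ℝ) + (j : ℝ) + (i : ℝ)) / 2)) := by
  rw [show (∏ i ∈ Icc 1 m, ∏ j ∈ Icc 1 m,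
      4 * Real.sinh (β * ((m : ℝ) + (j : ℝ) - (i : ℝ)) / 2) *
        Real.sinh (β * ((m : ℝ) + (j : ℝ) + (i : ℝ)) / 2)) =
      (∏ i ∈ Icc 1 m, ∏ j ∈ Icc 1 m, 2 * Real.sinh (β * ((m : ℝ) + (j : ℝ) - (i : ℝ)) / 2)) *
        ∏ i ∈ Icc 1 m, ∏ j ∈ Icc 1 m, 2 * Real.sinh (β * ((m : ℝ) + (j : ℝ) + (i : ℝ)) / 2) by
    simp_rw [← prod_mul_distrib]
    exact prod_congr rfl fun i _ => prod_congr rfl fun j _ => by ring]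
  rw [prod_Icc_two_mul_prod_Ico_sub m fun x => 2 * Real.sinh (β * x / 2)]
  refine (det_sinhRatioMatrix m α hβ).trans ?_
  rw [coeff_det_sinhRatioPoly m hβ]
  have hne : ∏ i ∈ Icc 1 m, ∏ j ∈ Icc 1 m,
      2 * Real.sinh (β * ((m : ℝ) + (j : ℝ) - (i : ℝ)) / 2) ≠ 0 := by
    refine prod_ne_zero_iff.mpr fun i hi => prod_ne_zero_iff.mpr fun j hj => ?_
    have hi' : (i : ℝ) ≤ m := by exact_mod_cast (mem_Icc.mp hi).2
    have hj' : (1 : ℝ) ≤ j := by exact_mod_cast (mem_Icc.mp hj).1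
    exact mul_ne_zero two_ne_zero (sinh_mul_div_two_ne_zero hβ (by linarith))
  rw [div_mul_eq_mul_div, mul_right_comm, mul_comm _ (∏ i ∈ Icc 1 m, ∏ j ∈ Icc 1 m,
      2 * Real.sinh (β * ((m : ℝ) + (j : ℝ) - (i : ℝ)) / 2)), mul_div_mul_left _ _ hne]
end

section
/- Let m ≥ 1. For α ∈ ℝ, α ≠ 0, define the m×m matrix U(α) by U(α)_{ij} = sinh(α(i+j+m)/2)/sinh(3α(i+j+m)/2) − sinh(α(j−i+m)/2)/sinh(3α(j−i+m)/2). Then the limit as α → 0 (α ≠ 0) of det U(α) / α^{2m²} exists and equals [∏_{1≤i<j≤2m} 3(j−i)] · [∏_{i=1}^{2m+1} ∏_{j=1}^{m} (1+3(2j−i))] / [∏_{i=1}^{m} ∏_{j=1}^{m} 9·(m+j−i)·(m+j+i)]. -/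
open Finset Filter

/-- If a matrix is congruent modulo `s` to a product through a module of rank `r`, then its
determinant is divisible by `s ^ (n - r)`. -/
theorem Matrix.pow_dvd_det_mul_add_smul {R : Type*} [CommRing R] [IsDomain R] {n r : ℕ} {s : R}
    (hs : s ≠ 0) (A : Matrix (Fin n) (Fin r) R) (B : Matrix (Fin r) (Fin n) R)
    (N : Matrix (Fin n) (Fin n) R) : s ^ (n - r) ∣ (A * B + s • N).det := by
  rcases le_total n r with h | h
  · simp [Nat.sub_eq_zero_of_le h]
  have h1 : (A * B + s • N).det = (Matrix.fromBlocks 1 (-B) A (s • N)).det := by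
    rw [Matrix.det_fromBlocks_one₁₁]
    congr 1
    rw [Matrix.mul_neg, sub_neg_eq_add, add_comm]
  have h2 :
      Matrix.fromBlocks (s • (1 : Matrix (Fin r) (Fin r) R)) 0 0 (1 : Matrix (Fin n) (Fin n) R) *
      Matrix.fromBlocks 1 (-B) A (s • N) =
      Matrix.fromBlocks (s • 1) (-B) A N *
      Matrix.fromBlocks (1 : Matrix (Fin r) (Fin r) R) 0 0 (s • (1 : Matrix (Fin n) (Fin n) R)) := by
    simp [Matrix.fromBlocks_multiply]
  have h3 := congrArg Matrix.det h2
  rw [Matrix.det_mul, Matrix.det_mul, Matrix.det_fromBlocks_zero₂₁, Matrix.det_fromBlocks_zero₂₁,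
    Matrix.det_smul, Matrix.det_smul, ← h1] at h3
  simp only [Fintype.card_fin, Matrix.det_one, mul_one, one_mul] at h3
  refine ⟨(Matrix.fromBlocks (s • 1) (-B) A N).det, mul_left_cancel₀ (pow_ne_zero r hs) ?_⟩
  rw [h3, ← mul_assoc, ← pow_add, Nat.add_sub_cancel' h, mul_comm]

open Polynomial in
/-- If the value of a polynomial matrix at `a` factors through rank `r`, then `a` is a root of its
determinant of multiplicity at least `n - r`. -/
theorem Matrix.X_sub_C_pow_dvd_det {K : Type*} [Field K] {n r : ℕ}
    (M : Matrix (Fin n) (Fin n) K[X]) (a : K) (A : Matrix (Fin n) (Fin r) K)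
    (B : Matrix (Fin r) (Fin n) K) (h : M.map (eval a) = A * B) :
    (X - C a) ^ (n - r) ∣ M.det := by
  have hdvd (i j) : ∃ q, M i j = C ((A * B) i j) + (X - C a) * q := by
    obtain ⟨q, hq⟩ := X_sub_C_dvd_sub_C_eval (a := a) (p := M i j)
    refine ⟨q, ?_⟩
    rw [← h, Matrix.map_apply, ← hq]
    ring
  choose N hN using hdvd
  have hM : M = A.map C * B.map C + (X - C a) • Matrix.of N := by
    ext1 i j
    rw [hN]
    simp [Matrix.mul_apply]
  rw [hM]
  exact Matrix.pow_dvd_det_mul_add_smul (X_sub_C_ne_zero a) _ _ _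

/-- The **Cauchy determinant**. -/
theorem Matrix.det_cauchy {K : Type*} [Field K] (n : ℕ) (x y : ℕ → K)
    (h : ∀ i < n, ∀ j < n, x i + y j ≠ 0) :
    (Matrix.of fun i j : Fin n => (x i + y j)⁻¹).det =
      (∏ j ∈ range n, ∏ i ∈ range j, (x j - x i) * (y j - y i)) /
        ∏ i ∈ range n, ∏ j ∈ range n, (x i + y j) := by
  induction n generalizing x y with
  | zero => simp
  | succ n ih =>
    have h00 := h 0 (by lia) 0 (by lia)
    let B : Matrix (Fin (n + 1)) (Fin (n + 1)) K := Matrix.of fun i j =>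
      (x i + y j)⁻¹ - (if i = 0 then 0 else (x i + y 0)⁻¹ * (x 0 + y 0)) * (x 0 + y j)⁻¹
    have hB : (Matrix.of fun i j : Fin (n + 1) => (x i + y j)⁻¹).det = B.det := by
      refine Matrix.det_eq_of_forall_row_eq_smul_add_const
        (fun i => if i = 0 then 0 else (x i + y 0)⁻¹ * (x 0 + y 0)) 0 (by simp) fun i j => ?_
      simp [B]
    have hB0 : B 0 0 = (x 0 + y 0)⁻¹ := by simp [B]
    have hBs (i : Fin n) : B i.succ 0 = 0 := by
      simp [B, h00]
    have hsub : B.submatrix Fin.succ Fin.succ = Matrix.of fun i j : Fin n =>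
        ((x (i + 1) - x 0) * (x (i + 1) + y 0)⁻¹) * (Matrix.of fun i j : Fin n =>
          ((y (j + 1) - y 0) * (x 0 + y (j + 1))⁻¹) *
            (Matrix.of fun i j : Fin n => (x (i + 1) + y (j + 1))⁻¹) i j) i j := by
      ext i j
      have h1 := h (i + 1) (by lia) (j + 1) (by lia)
      have h2 := h (i + 1) (by lia) 0 (by lia)
      have h3 := h 0 (by lia) (j + 1) (by lia)
      simp only [B, Matrix.submatrix_apply, Matrix.of_apply, Fin.val_succ, Fin.succ_ne_zero,
        if_false]
      field_simp
      ring
    have ih' := ih (fun i => x (i + 1)) (fun j => y (j + 1))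
      fun i hi j hj => h _ (by lia) _ (by lia)
    rw [hB, Matrix.det_succ_column_zero, Fin.sum_univ_succ]
    simp only [hBs, mul_zero, zero_mul, Finset.sum_const_zero, add_zero, Fin.val_zero, pow_zero,
      one_mul, hB0]
    rw [show (Fin.succAbove (0 : Fin (n + 1))) = Fin.succ from by ext; simp, hsub,
      Matrix.det_mul_column, Matrix.det_mul_row, ih', Finset.prod_range_succ']
    simp only [Finset.prod_range_succ', Finset.prod_mul_distrib, Finset.prod_inv_distrib,
      Finset.range_zero, Finset.prod_empty, mul_one, Fin.prod_univ_eq_prod_range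
        (fun i => x (i + 1) - x 0), Fin.prod_univ_eq_prod_range (fun i => y (i + 1) - y 0),
      Fin.prod_univ_eq_prod_range (fun i => x (i + 1) + y 0),
      Fin.prod_univ_eq_prod_range (fun i => x 0 + y (i + 1))]
    simp only [div_eq_mul_inv, mul_inv]
    ring

/-- The difference of Chebyshev-type quotients as a sum of products of hyperbolic sines. -/
theorem sinh_div_sinh_sub (e : ℕ) (he : e < 2) (r : ℕ) (x y : ℝ) (hadd : Real.sinh (y + x) ≠ 0)
    (hsub : Real.sinh (y - x) ≠ 0) :
    Real.sinh ((2 * r + e : ℕ) * (y + x)) / Real.sinh (y + x) -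
      Real.sinh ((2 * r + e : ℕ) * (y - x)) / Real.sinh (y - x) =
    ∑ l ∈ range r, 4 * Real.sinh ((2 * l + e + 1) * x) * Real.sinh ((2 * l + e + 1) * y) := by
  induction r with
  | zero =>
    interval_cases e <;> simp [hadd, hsub]
  | succ r ih =>
    have key (z : ℝ) (hz : Real.sinh z ≠ 0) :
        Real.sinh ((2 * (r + 1) + e : ℕ) * z) / Real.sinh z =
          Real.sinh ((2 * r + e : ℕ) * z) / Real.sinh z + 2 * Real.cosh ((2 * r + e + 1) * z) := by
      have h1 : ((2 * (r + 1) + e : ℕ) : ℝ) * z = (2 * r + e + 1) * z + z := by push_cast; ring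
      have h2 : ((2 * r + e : ℕ) : ℝ) * z = (2 * r + e + 1) * z - z := by push_cast; ring
      rw [h1, h2, Real.sinh_add, Real.sinh_sub]
      field_simp
      ring
    rw [Finset.sum_range_succ, ← ih, key _ hadd, key _ hsub, mul_add (2 * (r : ℝ) + e + 1),
      mul_sub (2 * (r : ℝ) + e + 1), Real.cosh_add, Real.cosh_sub]
    ring

/-- Kuperberg's matrix of differences of quotients of hyperbolic sines. -/
noncomputable def kuperbergMatrix (m : ℕ) (α β : ℝ) : Matrix (Fin m) (Fin m) ℝ :=
  Matrix.of fun i j =>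
    Real.sinh (α * (((i : ℕ) + 1 : ℝ) + ((j : ℕ) + 1 : ℝ) + m) / 2) /
      Real.sinh (β * (((i : ℕ) + 1 : ℝ) + ((j : ℕ) + 1 : ℝ) + m) / 2) -
    Real.sinh (α * (((j : ℕ) + 1 : ℝ) - ((i : ℕ) + 1 : ℝ) + m) / 2) /
      Real.sinh (β * (((j : ℕ) + 1 : ℝ) - ((i : ℕ) + 1 : ℝ) + m) / 2)

theorem kuperbergMatrix_neg (m : ℕ) (α β : ℝ) :
    kuperbergMatrix m (-α) β = -kuperbergMatrix m α β := by
  ext i j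
  simp only [kuperbergMatrix, Matrix.of_apply, Matrix.neg_apply, neg_mul, neg_div, Real.sinh_neg]
  ring

theorem sinh_mul_index_add_ne_zero {m : ℕ} {β : ℝ} (hβ : β ≠ 0) (i j : Fin m) :
    Real.sinh (β * (((i : ℕ) + 1 : ℝ) + ((j : ℕ) + 1 : ℝ) + m) / 2) ≠ 0 := by
  have : (((i : ℕ) + 1 : ℝ) + ((j : ℕ) + 1 : ℝ) + m) ≠ 0 := by positivity
  simp [Real.sinh_eq_zero, hβ, this]

theorem sinh_mul_index_sub_ne_zero {m : ℕ} {β : ℝ} (hβ : β ≠ 0) (i j : Fin m) :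
    Real.sinh (β * (((j : ℕ) + 1 : ℝ) - ((i : ℕ) + 1 : ℝ) + m) / 2) ≠ 0 := by
  have h : ((i : ℕ) : ℝ) < m := by exact_mod_cast i.2
  have : (((j : ℕ) + 1 : ℝ) - ((i : ℕ) + 1 : ℝ) + m) ≠ 0 := by
    have : (0 : ℝ) ≤ (j : ℕ) := by positivity
    linarith
  rw [Ne, Real.sinh_eq_zero]
  exact div_ne_zero (mul_ne_zero hβ this) two_ne_zero

theorem exists_mul_eq_kuperbergMatrix_natCast (m n : ℕ) {β : ℝ} (hβ : β ≠ 0) :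
    ∃ (A : Matrix (Fin m) (Fin (n / 2)) ℝ) (B : Matrix (Fin (n / 2)) (Fin m) ℝ),
      kuperbergMatrix m (β * n) β = A * B := by
  refine ⟨Matrix.of fun i l =>
      4 * Real.sinh ((2 * (l : ℕ) + (n % 2 : ℕ) + 1) * (β * ((i : ℕ) + 1) / 2)),
    Matrix.of fun l j =>
      Real.sinh ((2 * (l : ℕ) + (n % 2 : ℕ) + 1) * (β * ((j : ℕ) + 1 + m) / 2)), ?_⟩
  ext i j
  have hadd := sinh_mul_index_add_ne_zero hβ i j
  have hsub := sinh_mul_index_sub_ne_zero hβ i j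
  rw [show β * (((i : ℕ) + 1 : ℝ) + ((j : ℕ) + 1 : ℝ) + m) / 2 =
    β * ((j : ℕ) + 1 + m) / 2 + β * ((i : ℕ) + 1) / 2 by ring] at hadd
  rw [show β * (((j : ℕ) + 1 : ℝ) - ((i : ℕ) + 1 : ℝ) + m) / 2 =
    β * ((j : ℕ) + 1 + m) / 2 - β * ((i : ℕ) + 1) / 2 by ring] at hsub
  have key := sinh_div_sinh_sub (n % 2) (Nat.mod_lt _ (by norm_num)) (n / 2) _ _ hadd hsub
  rw [Nat.div_add_mod] at key
  rw [Matrix.mul_apply]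
  simp only [Matrix.of_apply]
  rw [Fin.sum_univ_eq_sum_range (fun l : ℕ =>
    4 * Real.sinh ((2 * (l : ℝ) + (n % 2 : ℕ) + 1) * (β * ((i : ℕ) + 1) / 2)) *
      Real.sinh ((2 * (l : ℝ) + (n % 2 : ℕ) + 1) * (β * ((j : ℕ) + 1 + m) / 2))), ← key]
  simp only [kuperbergMatrix, Matrix.of_apply]
  congr 3 <;> ring_nf

theorem exists_mul_eq_kuperbergMatrix_intCast (m : ℕ) (k : ℤ) {β : ℝ} (hβ : β ≠ 0) :
    ∃ (A : Matrix (Fin m) (Fin (k.natAbs / 2)) ℝ) (B : Matrix (Fin (k.natAbs / 2)) (Fin m) ℝ),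
      kuperbergMatrix m (β * k) β = A * B := by
  obtain ⟨A, B, hAB⟩ := exists_mul_eq_kuperbergMatrix_natCast m k.natAbs hβ
  have hcast : ((k.natAbs : ℕ) : ℝ) = ((k.natAbs : ℤ) : ℝ) := by simp
  rcases Int.natAbs_eq k with h | h
  · refine ⟨A, B, ?_⟩
    rw [← hAB, hcast, ← h]
  · refine ⟨-A, B, ?_⟩
    rw [Matrix.neg_mul, ← hAB, hcast, ← kuperbergMatrix_neg, ← mul_neg, ← Int.cast_neg, ← h]

open Polynomial in
/-- Kuperberg's matrix, up to row and column scaling, as a polynomial matrix in `exp α`. -/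
noncomputable def kuperbergPolyMatrix (m : ℕ) (β : ℝ) : Matrix (Fin m) (Fin m) ℝ[X] :=
  Matrix.of fun i j =>
    C (2 * Real.sinh (β * (((i : ℕ) + 1 : ℝ) + ((j : ℕ) + 1 : ℝ) + m) / 2))⁻¹ *
      (X ^ ((i : ℕ) + 1 + (j + 1) + m) - 1) -
    C (2 * Real.sinh (β * (((j : ℕ) + 1 : ℝ) - ((i : ℕ) + 1 : ℝ) + m) / 2))⁻¹ *
      (X ^ ((j : ℕ) + 1 + m) - X ^ ((i : ℕ) + 1))

theorem kuperbergPolyMatrix_map_eval_exp (m : ℕ) (α β : ℝ) :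
    (kuperbergPolyMatrix m β).map (Polynomial.eval (Real.exp α)) =
      Matrix.diagonal (fun i : Fin m => Real.exp (α * ((i : ℕ) + 1) / 2)) *
        kuperbergMatrix m α β *
        Matrix.diagonal (fun j : Fin m => Real.exp (α * ((j : ℕ) + 1 + m) / 2)) := by
  ext i j
  rw [Matrix.mul_diagonal, Matrix.diagonal_mul]
  simp only [kuperbergPolyMatrix, kuperbergMatrix, Matrix.map_apply, Matrix.of_apply,
    Polynomial.eval_sub, Polynomial.eval_mul, Polynomial.eval_C, Polynomial.eval_pow,
    Polynomial.eval_X, Polynomial.eval_one, ← Real.exp_nat_mul]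
  set p := Real.exp (α * ((i : ℕ) + 1) / 2) with hp
  set q := Real.exp (α * ((j : ℕ) + 1 + m) / 2) with hq
  have hp0 : p ≠ 0 := Real.exp_ne_zero _
  have hq0 : q ≠ 0 := Real.exp_ne_zero _
  have e1 : Real.exp (((i : ℕ) + 1 + (j + 1) + m : ℕ) * α) = p ^ 2 * q ^ 2 := by
    simp only [hp, hq, ← Real.exp_nat_mul, ← Real.exp_add]
    push_cast
    ring_nf
  have e2 : Real.exp (((j : ℕ) + 1 + m : ℕ) * α) = q ^ 2 := by
    simp only [hq, ← Real.exp_nat_mul]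
    push_cast
    ring_nf
  have e3 : Real.exp (((i : ℕ) + 1 : ℕ) * α) = p ^ 2 := by
    simp only [hp, ← Real.exp_nat_mul]
    push_cast
    ring_nf
  have s1 : Real.sinh (α * (((i : ℕ) + 1 : ℝ) + ((j : ℕ) + 1 : ℝ) + m) / 2) =
      (p * q - (p * q)⁻¹) / 2 := by
    rw [Real.sinh_eq, hp, hq, ← Real.exp_add, ← Real.exp_neg]
    ring_nf
  have s2 : Real.sinh (α * (((j : ℕ) + 1 : ℝ) - ((i : ℕ) + 1 : ℝ) + m) / 2) =
      (q / p - p / q) / 2 := by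
    rw [Real.sinh_eq, hp, hq, ← Real.exp_sub, ← Real.exp_sub]
    ring_nf
  rw [e1, e2, e3, s1, s2]
  simp only [mul_inv, div_eq_mul_inv]
  field_simp

theorem natDegree_det_kuperbergPolyMatrix_le (m : ℕ) (β : ℝ) :
    (kuperbergPolyMatrix m β).det.natDegree ≤ (2 * m + 1) * m := by
  have hentry (i j : Fin m) :
      (kuperbergPolyMatrix m β i j).natDegree ≤ (i : ℕ) + 1 + (j + 1) + m := by
    simp only [kuperbergPolyMatrix, Matrix.of_apply]
    compute_degree
    all_goals lia
  rw [Matrix.det_apply]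
  refine Polynomial.natDegree_sum_le_of_forall_le _ _ fun σ _ => ?_
  refine (Polynomial.natDegree_smul_le _ _).trans ((Polynomial.natDegree_prod_le _ _).trans ?_)
  refine (Finset.sum_le_sum fun i _ => hentry _ _).trans (le_of_eq ?_)
  simp only [Finset.sum_add_distrib, Equiv.sum_comp σ (fun i : Fin m => (i : ℕ)),
    Fin.sum_univ_eq_sum_range (fun i => i), Finset.sum_const, Finset.card_univ, Fintype.card_fin,
    smul_eq_mul]
  have := Finset.sum_range_id_mul_two m
  rcases m with _ | m
  · simp
  · simp only [Nat.add_sub_cancel] at this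
    nlinarith

theorem card_filter_two_mul_sub_eq_le (m : ℕ) (k : ℤ) :
    #{p ∈ Icc 1 (2 * m + 1) ×ˢ Icc 1 m | 2 * (p.2 : ℤ) - (p.1 : ℤ) = k} ≤ m - k.natAbs / 2 := by
  rcases le_total 0 k with hk | hk
  · calc _ ≤ #(Icc (k.natAbs / 2 + 1) m) := by
          refine Finset.card_le_card_of_injOn Prod.snd ?_ ?_
          · rintro ⟨i, j⟩ h
            simp only [coe_filter, Set.mem_ofPred_eq, mem_product, mem_Icc, coe_Icc, Set.mem_Icc]
              at h ⊢
            lia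
          · rintro ⟨i, j⟩ h ⟨i', j'⟩ h' hj
            simp only [coe_filter, Set.mem_ofPred_eq, Prod.mk.injEq] at h h' hj ⊢
            lia
      _ = _ := by simp
  · calc _ ≤ #(Icc 1 (m - k.natAbs / 2)) := by
          refine Finset.card_le_card_of_injOn Prod.snd ?_ ?_
          · rintro ⟨i, j⟩ h
            simp only [coe_filter, Set.mem_ofPred_eq, mem_product, mem_Icc, coe_Icc, Set.mem_Icc]
              at h ⊢
            lia
          · rintro ⟨i, j⟩ h ⟨i', j'⟩ h' hj
            simp only [coe_filter, Set.mem_ofPred_eq, Prod.mk.injEq] at h h' hj ⊢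
            lia
      _ = _ := by simp

open Polynomial in
theorem prod_X_sub_C_exp_dvd_det_kuperbergPolyMatrix (m : ℕ) {β : ℝ} (hβ : β ≠ 0) :
    (∏ p ∈ Icc 1 (2 * m + 1) ×ˢ Icc 1 m,
      (X - C (Real.exp (-(β * (2 * (p.2 : ℝ) - (p.1 : ℝ))))))) ∣ (kuperbergPolyMatrix m β).det := by
  have hcast (p : ℕ × ℕ) : 2 * (p.2 : ℝ) - (p.1 : ℝ) = ((2 * (p.2 : ℤ) - (p.1 : ℤ) : ℤ) : ℝ) := by
    push_cast; ring
  have hinj : Function.Injective fun k : ℤ => Real.exp (-(β * (k : ℝ))) := fun k l h => by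
    simpa [hβ] using h
  simp only [hcast]
  rw [Finset.prod_comp (fun k : ℤ => X - C (Real.exp (-(β * (k : ℝ)))))
    (fun p : ℕ × ℕ => 2 * (p.2 : ℤ) - (p.1 : ℤ))]
  refine Finset.prod_dvd_of_coprime ?_ fun k _ => ?_
  · intro k _ l _ hkl
    exact (pairwise_coprime_X_sub_C hinj hkl).pow
  · refine (pow_dvd_pow _ (card_filter_two_mul_sub_eq_le m k)).trans ?_
    obtain ⟨A, B, hAB⟩ := exists_mul_eq_kuperbergMatrix_intCast m (-k) hβ
    rw [← Int.natAbs_neg]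
    have h := kuperbergPolyMatrix_map_eval_exp m (-(β * k)) β
    rw [show kuperbergMatrix m (-(β * k)) β = A * B by rw [← hAB, Int.cast_neg, mul_neg],
      ← Matrix.mul_assoc, Matrix.mul_assoc] at h
    exact Matrix.X_sub_C_pow_dvd_det _ _ _ _ h

theorem sum_two_mul_sub (m : ℕ) :
    ∑ p ∈ Icc 1 (2 * m + 1) ×ˢ Icc 1 m, (2 * (p.2 : ℝ) - (p.1 : ℝ)) = 0 := by
  have gauss (n : ℕ) : ∑ i ∈ Icc 1 n, (i : ℝ) = n * (n + 1) / 2 := by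
    induction n with
    | zero => simp
    | succ n ih => rw [Finset.sum_Icc_succ_top (by lia), ih]; push_cast; ring
  rw [Finset.sum_product]
  simp only [Finset.sum_sub_distrib, ← Finset.mul_sum, gauss, Finset.sum_const, Nat.card_Icc,
    nsmul_eq_mul]
  push_cast
  ring

open Polynomial in
/-- **Kuperberg's determinant**, with the remaining Cauchy-type determinant left unevaluated. -/
theorem det_kuperbergMatrix (m : ℕ) (α : ℝ) {β : ℝ} (hβ : β ≠ 0) :
    (kuperbergMatrix m α β).det =
      (∏ p ∈ Icc 1 (2 * m + 1) ×ˢ Icc 1 m,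
        2 * Real.sinh ((α + β * (2 * (p.2 : ℝ) - (p.1 : ℝ))) / 2)) *
      (Matrix.of fun i j : Fin m =>
        (2 * Real.sinh (β * (((i : ℕ) + 1 : ℝ) + ((j : ℕ) + 1 : ℝ) + m) / 2))⁻¹).det := by
  have hcard : #(Icc 1 (2 * m + 1) ×ˢ Icc 1 m) = (2 * m + 1) * m := by simp
  have hexp (c : ℝ) : ∏ p ∈ Icc 1 (2 * m + 1) ×ˢ Icc 1 m,
      Real.exp (c * (2 * (p.2 : ℝ) - (p.1 : ℝ))) = 1 := by
    rw [← Real.exp_sum, ← Finset.mul_sum, sum_two_mul_sub, mul_zero, Real.exp_zero]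
  set Q : ℝ[X] := ∏ p ∈ Icc 1 (2 * m + 1) ×ˢ Icc 1 m,
      (X - C (Real.exp (-(β * (2 * (p.2 : ℝ) - (p.1 : ℝ)))))) with hQ
  have hQm : Q.Monic := monic_prod_X_sub_C _ _
  have hQd : Q.natDegree = (2 * m + 1) * m := by
    rw [hQ, natDegree_prod_of_monic _ _ fun _ _ => monic_X_sub_C _]
    simp [hcard]
  obtain ⟨c, hc⟩ : ∃ c : ℝ, (kuperbergPolyMatrix m β).det = Q * C c := by
    obtain ⟨q, hq⟩ := prod_X_sub_C_exp_dvd_det_kuperbergPolyMatrix m hβ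
    rcases eq_or_ne q 0 with rfl | hq0
    · exact ⟨0, by simpa using hq⟩
    · have hle := natDegree_det_kuperbergPolyMatrix_le m β
      rw [hq, ← hQ, hQm.natDegree_mul' hq0, hQd] at hle
      exact ⟨q.coeff 0, by rw [hq, ← eq_C_of_natDegree_eq_zero (by lia)]⟩
  have heval (x : ℝ) : ((kuperbergPolyMatrix m β).map (eval x)).det = Q.eval x * c := by
    have := congrArg (eval x) hc
    rwa [eval_mul, eval_C, ← coe_evalRingHom, RingHom.map_det] at this
  have hc0 : c = (Matrix.of fun i j : Fin m =>
      (2 * Real.sinh (β * (((i : ℕ) + 1 : ℝ) + ((j : ℕ) + 1 : ℝ) + m) / 2))⁻¹).det := by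
    have h0 := heval 0
    have hM : (kuperbergPolyMatrix m β).map (eval 0) = -Matrix.of fun i j : Fin m =>
        (2 * Real.sinh (β * (((i : ℕ) + 1 : ℝ) + ((j : ℕ) + 1 : ℝ) + m) / 2))⁻¹ := by
      ext i j
      simp [kuperbergPolyMatrix]
    have hQ0 : Q.eval 0 = (-1) ^ m := by
      rw [hQ, eval_prod]
      simp only [eval_sub, eval_X, eval_C, zero_sub, ← neg_mul]
      rw [Finset.prod_neg, hexp, hcard, mul_one, pow_mul, pow_succ, pow_mul]
      simp
    rw [hM, Matrix.det_neg, hQ0, Fintype.card_fin] at h0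
    exact (mul_left_cancel₀ (pow_ne_zero _ (by norm_num)) h0).symm
  have hα := heval (Real.exp α)
  have hrow : (∏ i : Fin m, Real.exp (α * ((i : ℕ) + 1) / 2)) *
      (∏ j : Fin m, Real.exp (α * ((j : ℕ) + 1 + m) / 2)) =
        Real.exp (α / 2) ^ ((2 * m + 1) * m) := by
    have gauss (n : ℕ) : ∑ i ∈ range n, (i : ℝ) = n * (n - 1) / 2 := by
      induction n with
      | zero => simp
      | succ n ih => rw [Finset.sum_range_succ, ih]; push_cast; ring
    have hsum : ∑ i : Fin m, ((i : ℕ) : ℝ) = m * (m - 1) / 2 := by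
      rw [Fin.sum_univ_eq_sum_range (fun i => (i : ℝ))]
      exact gauss m
    rw [← Real.exp_sum, ← Real.exp_sum, ← Real.exp_add, ← Real.exp_nat_mul]
    simp only [← Finset.sum_div, ← Finset.mul_sum, Finset.sum_add_distrib, hsum, Finset.sum_const,
      Finset.card_univ, Fintype.card_fin, nsmul_eq_mul]
    push_cast
    ring_nf
  have hQα : Q.eval (Real.exp α) = Real.exp (α / 2) ^ ((2 * m + 1) * m) *
      ∏ p ∈ Icc 1 (2 * m + 1) ×ˢ Icc 1 m,
        2 * Real.sinh ((α + β * (2 * (p.2 : ℝ) - (p.1 : ℝ))) / 2) := by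
    rw [hQ, eval_prod, ← hcard, ← Finset.prod_const, ← mul_one (∏ p ∈ _, Real.exp (α / 2)),
      ← hexp (-(β / 2)), ← Finset.prod_mul_distrib, ← Finset.prod_mul_distrib]
    refine Finset.prod_congr rfl fun p _ => ?_
    rw [eval_sub, eval_X, eval_C, Real.sinh_eq, ← Real.exp_add, mul_div_cancel₀ _ two_ne_zero,
      mul_sub (Real.exp _), ← Real.exp_add, ← Real.exp_add]
    ring_nf
  rw [kuperbergPolyMatrix_map_eval_exp, Matrix.det_mul, Matrix.det_mul, Matrix.det_diagonal,
    Matrix.det_diagonal, mul_right_comm, hrow, hQα, mul_assoc, hc0] at hα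
  exact mul_left_cancel₀ (pow_ne_zero _ (Real.exp_ne_zero _)) hα

theorem prod_range_two_mul_prod_range {M : Type*} [CommMonoid M] (m : ℕ) (f : ℕ → ℕ → M) :
    ∏ j ∈ range (2 * m), ∏ i ∈ range j, f i j =
      (∏ j ∈ range m, ∏ i ∈ range j, f i j) *
        ((∏ j ∈ range m, ∏ i ∈ range m, f i (m + j)) *
          ∏ j ∈ range m, ∏ i ∈ range j, f (m + i) (m + j)) := by
  rw [two_mul, Finset.prod_range_add]
  simp only [Finset.prod_range_add, Finset.prod_mul_distrib]

theorem det_inv_three_mul_index_add (m : ℕ) :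
    (Matrix.of fun i j : Fin m =>
      (3 * (((i : ℕ) + 1 : ℝ) + ((j : ℕ) + 1 : ℝ) + m))⁻¹).det =
      (∏ j ∈ Icc 1 (2 * m), ∏ i ∈ Ico 1 j, 3 * ((j : ℝ) - (i : ℝ))) /
        ∏ i ∈ Icc 1 m, ∏ j ∈ Icc 1 m,
          9 * ((m : ℝ) + (j : ℝ) - (i : ℝ)) * ((m : ℝ) + (j : ℝ) + (i : ℝ)) := by
  have hcauchy := Matrix.det_cauchy m (fun i => 3 * ((i : ℝ) + 1))
    (fun j => 3 * ((j : ℝ) + 1 + m)) fun i _ j _ => by positivity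
  have hIcc {g : ℕ → ℝ} (n : ℕ) : ∏ j ∈ Icc 1 n, g j = ∏ j ∈ range n, g (j + 1) := by
    rw [Finset.range_eq_Ico, Finset.prod_Ico_add' g 0 n 1]
    rfl
  have hIco {g : ℕ → ℝ} (n : ℕ) : ∏ j ∈ Ico 1 (n + 1), g j = ∏ j ∈ range n, g (j + 1) := hIcc n
  have hnum : ∏ j ∈ Icc 1 (2 * m), ∏ i ∈ Ico 1 j, 3 * ((j : ℝ) - (i : ℝ)) =
      ∏ j ∈ range (2 * m), ∏ i ∈ range j, 3 * ((j : ℝ) - (i : ℝ)) := by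
    simp only [hIcc, hIco]
    simp
  have hden : ∏ i ∈ Icc 1 m, ∏ j ∈ Icc 1 m,
      9 * ((m : ℝ) + (j : ℝ) - (i : ℝ)) * ((m : ℝ) + (j : ℝ) + (i : ℝ)) =
      (∏ j ∈ range m, ∏ i ∈ range m, 3 * (((m + j : ℕ) : ℝ) - (i : ℝ))) *
        ∏ i ∈ range m, ∏ j ∈ range m, (3 * ((i : ℝ) + 1) + 3 * ((j : ℝ) + 1 + m)) := by
    rw [Finset.prod_comm (s := range m)]
    simp only [hIcc, ← Finset.prod_mul_distrib]
    refine Finset.prod_congr rfl fun i _ => Finset.prod_congr rfl fun j _ => ?_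
    push_cast
    ring
  have hne : ∏ j ∈ range m, ∏ i ∈ range m, 3 * (((m + j : ℕ) : ℝ) - (i : ℝ)) ≠ 0 := by
    refine Finset.prod_ne_zero_iff.2 fun j _ => Finset.prod_ne_zero_iff.2 fun i hi => ?_
    have : (i : ℝ) < (m + j : ℕ) := by
      have := Finset.mem_range.1 hi
      exact_mod_cast (by lia : i < m + j)
    exact mul_ne_zero (by norm_num) (sub_ne_zero.2 this.ne')
  have hvand : ∏ j ∈ range m, ∏ i ∈ range j,
      (3 * ((j : ℝ) + 1) - 3 * ((i : ℝ) + 1)) * (3 * ((j : ℝ) + 1 + m) - 3 * ((i : ℝ) + 1 + m)) =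
      (∏ j ∈ range m, ∏ i ∈ range j, 3 * ((j : ℝ) - (i : ℝ))) *
        ∏ j ∈ range m, ∏ i ∈ range j, 3 * (((m + j : ℕ) : ℝ) - ((m + i : ℕ) : ℝ)) := by
    simp only [← Finset.prod_mul_distrib]
    refine Finset.prod_congr rfl fun i _ => Finset.prod_congr rfl fun j _ => ?_
    push_cast
    ring
  have hmat : (Matrix.of fun i j : Fin m =>
      (3 * (((i : ℕ) + 1 : ℝ) + ((j : ℕ) + 1 : ℝ) + m))⁻¹) =
      Matrix.of fun i j : Fin m => (3 * (((i : ℕ) : ℝ) + 1) + 3 * (((j : ℕ) : ℝ) + 1 + m))⁻¹ := by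
    ext i j
    simp only [Matrix.of_apply]
    ring_nf
  rw [hmat, hcauchy, hnum, hden, prod_range_two_mul_prod_range m
    (fun i j => 3 * ((j : ℝ) - (i : ℝ))), hvand, mul_left_comm, mul_div_mul_left _ _ hne]

theorem tendsto_two_mul_sinh_div (c : ℝ) :
    Tendsto (fun α : ℝ => 2 * Real.sinh (α * c / 2) / α) (nhdsWithin 0 {(0 : ℝ)}ᶜ) (nhds c) := by
  have h : HasDerivAt (fun α : ℝ => 2 * Real.sinh (α * c / 2)) c 0 := by
    have h1 : HasDerivAt (fun α : ℝ => α * c / 2) (c / 2) 0 := by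
      simpa using ((hasDerivAt_id (0 : ℝ)).mul_const c).div_const 2
    have h2 := h1.sinh.const_mul 2
    rwa [zero_mul, zero_div, Real.cosh_zero, one_mul, mul_div_cancel₀ c two_ne_zero] at h2
  refine h.tendsto_slope.congr fun α => ?_
  simp [slope_def_field]

/-- For `m ≥ 1`, the limit as `α → 0` (along `α ≠ 0`) of `det U(α) / α^(2m²)`, where
`U(α)_{ij} = sinh(α(i+j+m)/2)/sinh(3α(i+j+m)/2) − sinh(α(j−i+m)/2)/sinh(3α(j−i+m)/2)`,
exists and equals the explicit rational product
`[∏_{1≤i<j≤2m} 3(j−i)] · [∏_{i=1}^{2m+1} ∏_{j=1}^{m} (1+3(2j−i))] /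
 [∏_{i=1}^{m} ∏_{j=1}^{m} 9(m+j−i)(m+j+i)]`. -/
theorem det_U_homogeneous_limit (m : ℕ) (hm : 1 ≤ m) :
    Tendsto (fun α : ℝ =>
      Matrix.det (Matrix.of fun i j : Fin m =>
        Real.sinh (α * (((i : ℕ) + 1 : ℝ) + ((j : ℕ) + 1 : ℝ) + m) / 2) /
          Real.sinh (3 * α * (((i : ℕ) + 1 : ℝ) + ((j : ℕ) + 1 : ℝ) + m) / 2) -
        Real.sinh (α * (((j : ℕ) + 1 : ℝ) - ((i : ℕ) + 1 : ℝ) + m) / 2) /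
          Real.sinh (3 * α * (((j : ℕ) + 1 : ℝ) - ((i : ℕ) + 1 : ℝ) + m) / 2)) /
      α ^ (2 * m ^ 2))
      (nhdsWithin 0 {(0 : ℝ)}ᶜ)
      (nhds
        ((∏ j ∈ Icc 1 (2 * m), ∏ i ∈ Ico 1 j, 3 * ((j : ℝ) - (i : ℝ))) *
         (∏ i ∈ Icc 1 (2 * m + 1), ∏ j ∈ Icc 1 m, (1 + 3 * (2 * (j : ℝ) - (i : ℝ)))) /
         (∏ i ∈ Icc 1 m, ∏ j ∈ Icc 1 m,
           9 * ((m : ℝ) + (j : ℝ) - (i : ℝ)) * ((m : ℝ) + (j : ℝ) + (i : ℝ))))) := by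
  have hmain (α : ℝ) (hα : α ≠ 0) :
      (∏ p ∈ Icc 1 (2 * m + 1) ×ˢ Icc 1 m,
        2 * Real.sinh (α * (1 + 3 * (2 * (p.2 : ℝ) - (p.1 : ℝ))) / 2) / α) *
      (Matrix.of fun i j : Fin m =>
        (2 * Real.sinh (α * (3 * (((i : ℕ) + 1 : ℝ) + ((j : ℕ) + 1 : ℝ) + m)) / 2) / α)⁻¹).det =
      (kuperbergMatrix m α (3 * α)).det / α ^ (2 * m ^ 2) := by
    have hmat : (Matrix.of fun i j : Fin m =>
        (2 * Real.sinh (α * (3 * (((i : ℕ) + 1 : ℝ) + ((j : ℕ) + 1 : ℝ) + m)) / 2) / α)⁻¹) =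
        α • Matrix.of fun i j : Fin m =>
          (2 * Real.sinh (3 * α * (((i : ℕ) + 1 : ℝ) + ((j : ℕ) + 1 : ℝ) + m) / 2))⁻¹ := by
      ext i j
      simp only [Matrix.of_apply, Matrix.smul_apply, smul_eq_mul, inv_div, div_eq_mul_inv α]
      congr 4
      ring
    rw [det_kuperbergMatrix m α (mul_ne_zero three_ne_zero hα), hmat, Matrix.det_smul,
      Finset.prod_div_distrib, Finset.prod_const, Fintype.card_fin,
      show #(Icc 1 (2 * m + 1) ×ˢ Icc 1 m) = 2 * m ^ 2 + m by simp; ring, pow_add]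
    have harg (p : ℕ × ℕ) : α * (1 + 3 * (2 * (p.2 : ℝ) - (p.1 : ℝ))) / 2 =
        (α + 3 * α * (2 * (p.2 : ℝ) - (p.1 : ℝ))) / 2 := by ring
    simp only [harg]
    field_simp
  have hlim := (tendsto_finsetProd (Icc 1 (2 * m + 1) ×ˢ Icc 1 m) fun p _ =>
    tendsto_two_mul_sinh_div (1 + 3 * (2 * (p.2 : ℝ) - (p.1 : ℝ)))).mul
      (((Continuous.matrix_det (continuous_id (X := Matrix (Fin m) (Fin m) ℝ))).tendsto _).comp
        (tendsto_pi_nhds.2 fun i => tendsto_pi_nhds.2 fun j =>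
          (tendsto_two_mul_sinh_div (3 * (((i : ℕ) + 1 : ℝ) + ((j : ℕ) + 1 : ℝ) + m))).inv₀
            (by positivity)))
  have hval := det_inv_three_mul_index_add m
  rw [← Finset.prod_product', mul_comm (∏ j ∈ Icc 1 (2 * m), _), mul_div_assoc, ← hval]
  refine Tendsto.congr' ?_ hlim
  filter_upwards [self_mem_nhdsWithin] with α hα
  exact hmain α hα
end
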